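/- Let A be a C*-algebra, S a set, and K : S × S → A an A-positive definite kernel. For all n, m : ℕ, s : Fin n → S, t : Fin m → S, a : Fin n → A, b : Fin m → A, writing X = ∑_{i,k} (a i)⋆ * K(s i, t k) * (b k), one has the Schwarz inequality X⋆ * X ≤ ‖∑_{i,j} (a i)⋆ * K(s i, s j) * (a j)‖ • (∑_{k,l} (b k)⋆ * K(t k, t l) * (b l)) in A. -/

import Mathlib

section KernelSchwarz

variable {A : Type*} [NonUnitalCStarAlgebra A]

/-- The `A`-valued sesquilinear form `∑ (a i)⋆ K(s i, t k) (b k)` of a kernel `K`. -/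
def kernelForm {S : Type*} (K : S × S → A) {n m : ℕ} (s : Fin n → S) (t : Fin m → S)
    (a : Fin n → A) (b : Fin m → A) : A :=
  ∑ i, ∑ k, star (a i) * K (s i, t k) * b k

section Algebra

variable {S : Type*} (K : S × S → A) {n m : ℕ} (s : Fin n → S) (t : Fin m → S)
  (a : Fin n → A) (b : Fin m → A)

lemma kernelForm_append_self :
    kernelForm K (Fin.append s t) (Fin.append s t) (Fin.append a b) (Fin.append a b) =
      kernelForm K s s a a + kernelForm K s t a b +
        (kernelForm K t s b a + kernelForm K t t b b) := by
  simp only [kernelForm, Fin.sum_univ_add, Fin.append_left, Fin.append_right,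
    Finset.sum_add_distrib]
  abel

lemma kernelForm_mul_right (c : A) :
    kernelForm K s t a (fun k => b k * c) = kernelForm K s t a b * c := by
  simp only [kernelForm, Finset.sum_mul, mul_assoc]

lemma kernelForm_mul_left (c : A) :
    kernelForm K s t (fun i => a i * c) b = star c * kernelForm K s t a b := by
  simp only [kernelForm, Finset.mul_sum, star_mul, mul_assoc]

lemma kernelForm_smul_right (z : ℂ) :
    kernelForm K s t a (fun k => z • b k) = z • kernelForm K s t a b := by
  simp only [kernelForm, Finset.smul_sum, mul_smul_comm]

lemma kernelForm_smul_left (z : ℂ) :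
    kernelForm K s t (fun i => z • a i) b = star z • kernelForm K s t a b := by
  simp only [kernelForm, Finset.smul_sum, star_smul, smul_mul_assoc]

end Algebra

/-- If `X + Y` and `i (X - Y)` are self-adjoint, then `Y = X⋆`. -/
lemma eq_star_of_isSelfAdjoint_add_of_isSelfAdjoint_I_smul_sub {X Y : A}
    (hadd : IsSelfAdjoint (X + Y)) (hsub : IsSelfAdjoint (Complex.I • (X - Y))) :
    Y = star X := by
  have h₁ : star X + star Y = X + Y := by simpa using hadd.star_eq
  have h₂ : -(star X - star Y) = X - Y := by
    have h := hsub.star_eq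
    rw [star_smul, star_sub, Complex.star_def, Complex.conj_I, neg_smul, ← smul_neg] at h
    exact smul_right_injective A Complex.I_ne_zero h
  have h₃ : (2 : ℂ) • Y = (2 : ℂ) • star X := by
    rw [two_smul, two_smul]
    calc Y + Y = (X + Y) - (X - Y) := by abel
      _ = star X + star X := by rw [← h₁, ← h₂]; abel
  exact smul_right_injective A two_ne_zero h₃

variable [PartialOrder A] [StarOrderedRing A]

/-- For a positive definite kernel, the associated form is hermitian. -/
lemma kernelForm_swap {S : Type*} {K : S × S → A}
    (hK : ∀ (n : ℕ) (s : Fin n → S) (a : Fin n → A), 0 ≤ kernelForm K s s a a)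
    {n m : ℕ} (s : Fin n → S) (t : Fin m → S) (a : Fin n → A) (b : Fin m → A) :
    kernelForm K t s b a = star (kernelForm K s t a b) := by
  have key (z : ℂ) :
      IsSelfAdjoint (z • kernelForm K s t a b + star z • kernelForm K t s b a) := by
    have h := (hK _ (Fin.append s t) (Fin.append a fun k => z • b k)).isSelfAdjoint.sub
      ((hK _ s a).isSelfAdjoint.add (hK _ t fun k => z • b k).isSelfAdjoint)
    rw [kernelForm_append_self, kernelForm_smul_right K s t, kernelForm_smul_left K t s] at h
    convert h using 1
    abel
  apply eq_star_of_isSelfAdjoint_add_of_isSelfAdjoint_I_smul_sub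
  · simpa using key 1
  · simpa [smul_sub, sub_eq_add_neg] using key Complex.I

/-- The abstract Schwarz inequality for a positive block `[[P, X], [X⋆, Q]]`. -/
lemma star_mul_self_le_norm_smul_of_forall_nonneg {P Q X : A} (hP : 0 ≤ P)
    (h : ∀ r : ℝ, 0 ≤ star X * P * X - (2 * r) • (star X * X) + (r ^ 2) • Q) :
    star X * X ≤ ‖P‖ • Q := by
  have hr (r : ℝ) (hr : ‖P‖ < r) : star X * X ≤ r • Q := by
    have hr₀ : 0 < r := (norm_nonneg P).trans_lt hr
    rw [← smul_le_smul_iff_of_pos_left hr₀, ← sub_nonneg]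
    calc (0 : A) ≤ star X * P * X - (2 * r) • (star X * X) + (r ^ 2) • Q := h r
      _ ≤ r • (star X * X) - (2 * r) • (star X * X) + (r ^ 2) • Q := by
        gcongr
        exact (CStarAlgebra.star_left_conjugate_le_norm_smul hP.isSelfAdjoint).trans
          (smul_le_smul_of_nonneg_right hr.le (star_mul_self_nonneg X))
      _ = r • r • Q - r • (star X * X) := by module
  refine ge_of_tendsto (f := fun r : ℝ => r • Q) (x := nhdsWithin ‖P‖ (Set.Ioi ‖P‖)) ?_
    (Filter.eventually_of_mem self_mem_nhdsWithin hr)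
  exact ((continuous_id.smul continuous_const).tendsto ‖P‖).mono_left nhdsWithin_le_nhds

end KernelSchwarz


/-- The Schwarz inequality for an `A`-positive definite kernel:
`X⋆ * X ≤ ‖∑ (a i)⋆ K(s i, s j) (a j)‖ • (∑ (b k)⋆ K(t k, t l) (b l))`
where `X = ∑ (a i)⋆ K(s i, t k) (b k)`. -/
theorem kernel_schwarz_inequality
    {A : Type*} [NonUnitalCStarAlgebra A] [PartialOrder A] [StarOrderedRing A]
    {S : Type*} (K : S × S → A)
    (hK : ∀ (n : ℕ) (s : Fin n → S) (a : Fin n → A),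
      0 ≤ ∑ i, ∑ j, star (a i) * K (s i, s j) * a j) :
    ∀ (n m : ℕ) (s : Fin n → S) (t : Fin m → S) (a : Fin n → A) (b : Fin m → A),
      star (∑ i, ∑ k, star (a i) * K (s i, t k) * b k) *
          (∑ i, ∑ k, star (a i) * K (s i, t k) * b k) ≤
        ‖∑ i, ∑ j, star (a i) * K (s i, s j) * a j‖ •
          ∑ k, ∑ l, star (b k) * K (t k, t l) * b l := by
  intro n m s t a b
  change ∀ (n : ℕ) (s : Fin n → S) (a : Fin n → A), 0 ≤ kernelForm K s s a a at hK
  change star (kernelForm K s t a b) * kernelForm K s t a b ≤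
    ‖kernelForm K s s a a‖ • kernelForm K t t b b
  refine star_mul_self_le_norm_smul_of_forall_nonneg (hK _ s a) fun r => ?_
  have h := hK _ (Fin.append s t)
    (Fin.append (fun i => a i * kernelForm K s t a b) fun k => (-r : ℂ) • b k)
  simp only [kernelForm_append_self, kernelForm_mul_left, kernelForm_mul_right,
    kernelForm_smul_left, kernelForm_smul_right, kernelForm_swap hK s t] at h
  convert h using 1
  simp only [← Complex.ofReal_neg, Complex.star_def, Complex.conj_ofReal, Complex.coe_smul,
    star_smul, star_trivial, star_mul, star_star, mul_assoc]
  module
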